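/- Let n ≥ 1 and let f, g, δ, d ∈ ℂ[[x]] satisfy fg = 1 + δ x^n and d ≡ −δ + δ^2 x^n (mod x^{2n}). Then f · (g + g·d·x^n) ≡ 1 (mod x^{3n}). -/

import Mathlib

section CommRing

variable {R : Type*} [CommRing R]

theorem dvd_one_sub_mul_sub_one_of_dvd_sub_geom_sum {a u c : R} {m : ℕ} (hu : a ∣ u ^ m)
    (hc : a ∣ c - ∑ i ∈ Finset.range m, u ^ i) : a ∣ (1 - u) * c - 1 := by
  have split_error :
      (1 - u) * c - 1 = (1 - u) * (c - ∑ i ∈ Finset.range m, u ^ i) - u ^ m := by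
    linear_combination mul_neg_geom_sum u m
  rw [split_error]
  exact dvd_sub (hc.mul_left _) hu

theorem reciprocal_extension_step_general {f g δ d y : R} (h : f * g = 1 + δ * y)
    (hd : y ^ 2 ∣ d - (-δ + δ ^ 2 * y)) : y ^ 3 ∣ f * (g + g * d * y) - 1 := by
  have factor : f * (g + g * d * y) = (1 - -(δ * y)) * (1 + d * y) := by
    linear_combination (1 + d * y) * h
  have geom_sum_error : 1 + d * y - ∑ i ∈ Finset.range 3, (-(δ * y)) ^ i =
      (d - (-δ + δ ^ 2 * y)) * y := by
    simp only [Finset.sum_range_succ, Finset.sum_range_zero]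
    ring
  rw [factor]
  apply dvd_one_sub_mul_sub_one_of_dvd_sub_geom_sum (m := 3)
  · exact pow_dvd_pow_of_dvd (dvd_neg.mpr (dvd_mul_left y δ)) 3
  · rw [geom_sum_error, pow_succ]
    exact mul_dvd_mul_right hd y

end CommRing

/-- correctness of the final extension step of the reciprocal
algorithm.  If `f·g = 1 + δ·xⁿ` and `d ≡ -δ + δ²xⁿ (mod x^{2n})`, then
`f·(g + g·d·xⁿ) ≡ 1 (mod x^{3n})`. -/
theorem reciprocal_extension_step (n : ℕ) (hn : 1 ≤ n) (f g δ d : PowerSeries ℂ)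
    (h : f * g = 1 + δ * PowerSeries.X ^ n)
    (hd : (PowerSeries.X : PowerSeries ℂ) ^ (2 * n) ∣
      (d - (-δ + δ ^ 2 * PowerSeries.X ^ n))) :
    (PowerSeries.X : PowerSeries ℂ) ^ (3 * n) ∣
      (f * (g + g * d * PowerSeries.X ^ n) - 1) := by
  rw [pow_mul' _ 2 n] at hd
  simpa only [pow_mul' _ 3 n] using reciprocal_extension_step_general h hd
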